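/- Let F : Fin 4 → Fin 4 → ℝ be antisymmetric (F_{ab} = −F_{ba}) on 4-dimensional Minkowski space. Define ψ = (1/2) F_{ab} F^{ab}, the energy-momentum tensor T_{ab} = F_{ar} F^{r}{}_{b} + (1/2) ψ η_{ab}, and the Hodge dual ⋆F_{ab} = (1/2) ε_{ab}{}^{pq} F_{pq}. Then for all a,b,c,d: (⋆F)_{ab} (⋆F)^{cd} + F_{ab} F^{cd} = −(δ^{c}_{a} T^{d}{}_{b} − δ^{d}_{a} T^{c}{}_{b} − δ^{c}_{b} T^{d}{}_{a} + δ^{d}_{b} T^{c}{}_{a}). -/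

import Mathlib

noncomputable section

/-- The Minkowski metric `η = diag(+1,−1,−1,−1)` on `ℝ⁴`.  Its inverse has the
same components, so `mink` is also used to raise indices. -/
def mink : Fin 4 → Fin 4 → ℝ :=
  fun a b => if a = b then (if a = 0 then 1 else -1) else 0

/-- The totally antisymmetric Levi-Civita tensor with all indices down and
`ε₀₁₂₃ = +1`, via the Vandermonde-product formula. -/
def lev : Fin 4 → Fin 4 → Fin 4 → Fin 4 → ℝ :=
  fun a b c d =>
    (((b : ℕ) : ℝ) - ((a : ℕ) : ℝ)) * (((c : ℕ) : ℝ) - ((a : ℕ) : ℝ)) *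
    (((d : ℕ) : ℝ) - ((a : ℕ) : ℝ)) * (((c : ℕ) : ℝ) - ((b : ℕ) : ℝ)) *
    (((d : ℕ) : ℝ) - ((b : ℕ) : ℝ)) * (((d : ℕ) : ℝ) - ((c : ℕ) : ℝ)) / 12

/-- `ε_{ab}{}^{pq}`: the Levi-Civita tensor with its last two indices raised
by the Minkowski metric. -/
def levUp (a b p q : Fin 4) : ℝ := ∑ r, ∑ s, mink p r * mink q s * lev a b r s

/-- The Kronecker delta on `Fin 4`. -/
def kd (a b : Fin 4) : ℝ := if a = b then 1 else 0

/-- Hodge dual `⋆F_{ab} = (1/2) ε_{ab}{}^{pq} F_{pq}` of a rank-2 tensor. -/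
def hodge2 (F : Fin 4 → Fin 4 → ℝ) (a b : Fin 4) : ℝ :=
  (1/2) * ∑ p, ∑ q, levUp a b p q * F p q

/-- Rank-2 tensor with both indices raised by the Minkowski metric. -/
def up2 (F : Fin 4 → Fin 4 → ℝ) (a b : Fin 4) : ℝ :=
  ∑ p, ∑ q, mink a p * mink b q * F p q

/-- The invariant `ψ = (1/2) F_{ab} F^{ab}`. -/
def emPsi (F : Fin 4 → Fin 4 → ℝ) : ℝ := (1/2) * ∑ a, ∑ b, F a b * up2 F a b

/-- The energy-momentum tensor `T_{ab} = F_{ar} F^{r}{}_{b} + (1/2) ψ η_{ab}`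
of the electromagnetic field. -/
def emT (F : Fin 4 → Fin 4 → ℝ) (a b : Fin 4) : ℝ :=
  (∑ r, ∑ p, F a r * mink r p * F p b) + (1/2) * emPsi F * mink a b

/-!
Two Levi-Civita symbols multiply to a generalized Kronecker delta, and raising all four indices
of `ε` multiplies it by `det η = -1`. Hence
`⋆F_{ab} ⋆F^{cd} = -(1/4) δ^{cdrs}_{abpq} F^{pq} F_{rs}`. Expand the delta into products of
complementary `2 × 2` minors: by antisymmetry, the minor carrying `F_{ab} F^{cd}` cancels the
second term of the identity, the trace `F^{pq} F_{pq}` supplies `ψ`, and the mixed minors supply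
`F^{dq} F_{bq}`. The last two combine into `T`.
-/

section GeneralizedKronecker

open Matrix

variable {ι n R : Type*} [Fintype ι] [DecidableEq ι] [DecidableEq n] [CommRing R]

/-- The generalized Kronecker delta `δ^{c₁…c_k}_{a₁…a_k} = det (δ_{aᵢ cⱼ})`. Its value
`genKronecker a id` at an index tuple `a : ι → ι` is the Levi-Civita symbol of `a`. -/
def genKronecker (a c : ι → n) : R := ((1 : Matrix n n R).submatrix a c).det

lemma det_submatrix_left (M : Matrix ι ι R) (a : ι → ι) :
    (M.submatrix a id).det = genKronecker a id * M.det := by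
  have select_rows := one_submatrix_mul a (Equiv.refl ι) M
  exact (congrArg det select_rows).symm.trans (det_mul _ _)

lemma genKronecker_id_mul_genKronecker_id (a c : ι → ι) :
    (genKronecker a id * genKronecker c id : R) = genKronecker a c := by
  have transpose : ((1 : Matrix ι ι R).submatrix id c).det = genKronecker c id := by
    rw [← det_transpose, transpose_submatrix, transpose_one, genKronecker]
  rw [← transpose, ← det_submatrix_left]
  rfl

lemma prod_comp_mul_genKronecker_id (σ : ι → R) (a : ι → ι) :
    (∏ i, σ (a i)) * genKronecker a id = (∏ i, σ i) * genKronecker a id := by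
  have scale_rows : (diagonal σ).submatrix a id =
      diagonal (σ ∘ a) * (1 : Matrix ι ι R).submatrix a id := by
    ext i j
    simp [diagonal_apply, one_apply]
  calc (∏ i, σ (a i)) * genKronecker a id
      = ((diagonal σ).submatrix a id).det := by
        rw [scale_rows, det_mul, det_diagonal, genKronecker]; rfl
    _ = (∏ i, σ i) * genKronecker a id := by
        rw [det_submatrix_left, det_diagonal, mul_comm]

lemma det_vandermonde_four (x : Fin 4 → R) :
    (vandermonde x).det =
      (x 1 - x 0) * (x 2 - x 0) * (x 3 - x 0) * (x 2 - x 1) * (x 3 - x 1) * (x 3 - x 2) := by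
  simp [det_vandermonde, Fin.prod_univ_succ, Fin.prod_Ioi_succ]
  ring

lemma genKronecker_two (a b c d : n) :
    (genKronecker ![a, b] ![c, d] : R) =
      (1 : Matrix n n R) a c * (1 : Matrix n n R) b d -
        (1 : Matrix n n R) a d * (1 : Matrix n n R) b c := by
  rw [genKronecker, det_fin_two]
  rfl

lemma det_fin_four_eq_laplace (M : Matrix (Fin 4) (Fin 4) R) :
    M.det =
      (M 0 0 * M 1 1 - M 0 1 * M 1 0) * (M 2 2 * M 3 3 - M 2 3 * M 3 2) -
      (M 0 0 * M 2 1 - M 0 1 * M 2 0) * (M 1 2 * M 3 3 - M 1 3 * M 3 2) +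
      (M 0 0 * M 3 1 - M 0 1 * M 3 0) * (M 1 2 * M 2 3 - M 1 3 * M 2 2) +
      (M 1 0 * M 2 1 - M 1 1 * M 2 0) * (M 0 2 * M 3 3 - M 0 3 * M 3 2) -
      (M 1 0 * M 3 1 - M 1 1 * M 3 0) * (M 0 2 * M 2 3 - M 0 3 * M 2 2) +
      (M 2 0 * M 3 1 - M 2 1 * M 3 0) * (M 0 2 * M 1 3 - M 0 3 * M 1 2) := by
  simp [det_succ_row_zero, Fin.sum_univ_succ, Fin.succAbove]
  ring

lemma genKronecker_four_eq_laplace (a b p q c d r s : n) :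
    (genKronecker ![a, b, p, q] ![c, d, r, s] : R) =
      genKronecker ![a, b] ![c, d] * genKronecker ![p, q] ![r, s] -
      genKronecker ![a, p] ![c, d] * genKronecker ![b, q] ![r, s] +
      genKronecker ![a, q] ![c, d] * genKronecker ![b, p] ![r, s] +
      genKronecker ![b, p] ![c, d] * genKronecker ![a, q] ![r, s] -
      genKronecker ![b, q] ![c, d] * genKronecker ![a, p] ![r, s] +
      genKronecker ![p, q] ![c, d] * genKronecker ![a, b] ![r, s] := by
  simp only [genKronecker_two]
  rw [genKronecker, det_fin_four_eq_laplace]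
  rfl

variable [Fintype n] {G H : n → n → R}

lemma sum_genKronecker_two_mul_lower (hG : ∀ a b, G a b = -G b a) (a b : n) :
    ∑ r, ∑ s, genKronecker ![a, b] ![r, s] * G r s = 2 * G a b := by
  simp [genKronecker_two, sub_mul, Finset.sum_sub_distrib, one_apply, hG b a, two_mul]

lemma sum_genKronecker_two_mul_upper (hH : ∀ a b, H a b = -H b a) (c d : n) :
    ∑ p, ∑ q, genKronecker ![p, q] ![c, d] * H p q = 2 * H c d := by
  simp [genKronecker_two, sub_mul, Finset.sum_sub_distrib, one_apply, hH d c, two_mul]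

lemma sum_genKronecker_two_mul_vec (v : n → R) (a c d : n) :
    ∑ p, genKronecker ![a, p] ![c, d] * v p =
      (1 : Matrix n n R) a c * v d - (1 : Matrix n n R) a d * v c := by
  simp [genKronecker_two, sub_mul, Finset.sum_sub_distrib, one_apply]

lemma sum_genKronecker_four_mul (hG : ∀ a b, G a b = -G b a) (a b p q c d : n) :
    ∑ r, ∑ s, genKronecker ![a, b, p, q] ![c, d, r, s] * G r s =
      2 * (genKronecker ![a, b] ![c, d] * G p q - genKronecker ![a, p] ![c, d] * G b q +
        genKronecker ![a, q] ![c, d] * G b p + genKronecker ![b, p] ![c, d] * G a q -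
        genKronecker ![b, q] ![c, d] * G a p + genKronecker ![p, q] ![c, d] * G a b) := by
  simp only [genKronecker_four_eq_laplace, add_mul, sub_mul, Finset.sum_add_distrib,
    Finset.sum_sub_distrib, mul_assoc, ← Finset.mul_sum, sum_genKronecker_two_mul_lower hG]
  ring

lemma sum_genKronecker_four_mul_mul (hG : ∀ a b, G a b = -G b a) (hH : ∀ a b, H a b = -H b a)
    (a b c d : n) :
    ∑ p, ∑ q, (∑ r, ∑ s, genKronecker ![a, b, p, q] ![c, d, r, s] * G r s) * H p q =
      2 * genKronecker ![a, b] ![c, d] * ∑ p, ∑ q, G p q * H p q -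
      4 * ((1 : Matrix n n R) a c * ∑ q, G b q * H d q -
        (1 : Matrix n n R) a d * ∑ q, G b q * H c q -
        (1 : Matrix n n R) b c * ∑ q, G a q * H d q +
        (1 : Matrix n n R) b d * ∑ q, G a q * H c q) +
      4 * (G a b * H c d) := by
  have outer : ∑ p, ∑ q, genKronecker ![p, q] ![c, d] * (G a b * H p q) =
      2 * (G a b * H c d) := by
    simp only [mul_left_comm _ (G a b), ← Finset.mul_sum, sum_genKronecker_two_mul_upper hH]
  have swap (v : n → R) (x : n) : ∑ p, v p * H p x = -∑ p, v p * H x p := by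
    simp only [hH _ x, mul_neg, Finset.sum_neg_distrib]
  simp only [sum_genKronecker_four_mul hG, mul_assoc, ← Finset.mul_sum, add_mul, sub_mul,
    Finset.sum_add_distrib, Finset.sum_sub_distrib, outer]
  simp only [sum_genKronecker_two_mul_vec, Finset.sum_sub_distrib, ← Finset.mul_sum, swap]
  ring

end GeneralizedKronecker

lemma lev_eq_genKronecker (a b c d : Fin 4) : lev a b c d = genKronecker ![a, b, c, d] id := by
  let x : Fin 4 → ℝ := fun i ↦ (i : ℕ)
  have det_x : (Matrix.vandermonde x).det = 12 := by
    norm_num [det_vandermonde_four, x]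
  have lev_eq : lev a b c d = (Matrix.vandermonde (x ∘ ![a, b, c, d])).det / 12 := by
    rw [det_vandermonde_four]
    rfl
  have select_rows : (Matrix.vandermonde (x ∘ ![a, b, c, d])).det =
      genKronecker ![a, b, c, d] id * (Matrix.vandermonde x).det :=
    det_submatrix_left (Matrix.vandermonde x) ![a, b, c, d]
  rw [lev_eq, select_rows, det_x, mul_div_cancel_right₀ _ (by norm_num)]

lemma lev_mul_lev (a b p q c d r s : Fin 4) :
    lev a b p q * lev c d r s = genKronecker ![a, b, p, q] ![c, d, r, s] := by
  rw [lev_eq_genKronecker, lev_eq_genKronecker, genKronecker_id_mul_genKronecker_id]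

/-- The diagonal entry `η_{aa}`: as `η` is diagonal, raising an index `a` multiplies a component
by this sign. -/
def minkSign (a : Fin 4) : ℝ := if a = 0 then 1 else -1

lemma minkSign_mul_self (a : Fin 4) : minkSign a * minkSign a = 1 := by
  unfold minkSign
  split_ifs <;> norm_num

lemma minkSign_mul_mink (a b : Fin 4) : minkSign a * mink a b = kd a b := by
  have mink_eq : mink a b = minkSign a * kd a b := by simp [mink, minkSign, kd]
  rw [mink_eq, ← mul_assoc, minkSign_mul_self, one_mul]

lemma sum_mink_mul (a : Fin 4) (f : Fin 4 → ℝ) :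
    ∑ p, mink a p * f p = minkSign a * f a := by
  simp [mink, minkSign]

lemma up2_eq (F : Fin 4 → Fin 4 → ℝ) (a b : Fin 4) :
    up2 F a b = minkSign a * minkSign b * F a b := by
  simp only [up2, mul_assoc, ← Finset.mul_sum, sum_mink_mul]

lemma up2_antisymm {F : Fin 4 → Fin 4 → ℝ} (hF : ∀ a b, F a b = -F b a) (a b : Fin 4) :
    up2 F a b = -up2 F b a := by
  rw [up2_eq, up2_eq, hF a b]
  ring

lemma prod_minkSign_mul_lev (a b c d : Fin 4) :
    minkSign a * minkSign b * minkSign c * minkSign d * lev a b c d = -lev a b c d := by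
  have raise := prod_comp_mul_genKronecker_id minkSign ![a, b, c, d]
  have det_mink : ∏ i, minkSign i = -1 := by simp [Fin.prod_univ_four, minkSign]
  rw [det_mink, ← lev_eq_genKronecker] at raise
  simpa [Fin.prod_univ_four] using raise

lemma hodge2_eq_sum_lev_mul_up2 (F : Fin 4 → Fin 4 → ℝ) (a b : Fin 4) :
    hodge2 F a b = (1/2) * ∑ p, ∑ q, lev a b p q * up2 F p q := by
  have levUp_eq (p q : Fin 4) : levUp a b p q = minkSign p * minkSign q * lev a b p q :=
    up2_eq (lev a b) p q
  simp only [hodge2, levUp_eq, up2_eq, mul_left_comm, mul_assoc]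

lemma up2_hodge2 (F : Fin 4 → Fin 4 → ℝ) (c d : Fin 4) :
    up2 (hodge2 F) c d = -(1/2) * ∑ r, ∑ s, lev c d r s * F r s := by
  rw [up2_eq, hodge2_eq_sum_lev_mul_up2, mul_left_comm, neg_mul, ← mul_neg]
  simp only [Finset.mul_sum, ← Finset.sum_neg_distrib]
  refine Finset.sum_congr rfl fun r _ ↦ Finset.sum_congr rfl fun s _ ↦ ?_
  rw [up2_eq]
  linear_combination (1/2) * F r s * prod_minkSign_mul_lev c d r s

lemma hodge2_mul_up2_hodge2 (F : Fin 4 → Fin 4 → ℝ) (a b c d : Fin 4) :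
    hodge2 F a b * up2 (hodge2 F) c d = -(1/4) * ∑ p, ∑ q,
      (∑ r, ∑ s, genKronecker ![a, b, p, q] ![c, d, r, s] * F r s) * up2 F p q := by
  have factor (p q : Fin 4) :
      (∑ r, ∑ s, genKronecker ![a, b, p, q] ![c, d, r, s] * F r s) * up2 F p q =
        lev a b p q * up2 F p q * ∑ r, ∑ s, lev c d r s * F r s := by
    simp only [← lev_mul_lev, mul_assoc, ← Finset.mul_sum]
    ring
  rw [hodge2_eq_sum_lev_mul_up2, up2_hodge2]
  simp only [factor, ← Finset.sum_mul]
  ring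

lemma sum_mink_mul_emT {F : Fin 4 → Fin 4 → ℝ} (hF : ∀ a b, F a b = -F b a) (d b : Fin 4) :
    ∑ p, mink d p * emT F p b = (1/2) * emPsi F * kd d b - ∑ q, F b q * up2 F d q := by
  have quadratic : minkSign d * ∑ r, ∑ p, F d r * mink r p * F p b =
      -∑ q, F b q * up2 F d q := by
    simp only [mul_assoc, ← Finset.mul_sum, sum_mink_mul]
    rw [Finset.mul_sum, ← Finset.sum_neg_distrib]
    refine Finset.sum_congr rfl fun q _ ↦ ?_
    rw [up2_eq, hF q b]
    ring
  rw [sum_mink_mul, emT, mul_add, quadratic, ← minkSign_mul_mink]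
  ring

/-- Electromagnetic quadratic identity:
`(⋆F)_{ab} (⋆F)^{cd} + F_{ab} F^{cd}
  = −(δ^{c}_{a} T^{d}{}_{b} − δ^{d}_{a} T^{c}{}_{b} − δ^{c}_{b} T^{d}{}_{a} + δ^{d}_{b} T^{c}{}_{a})`. -/
theorem electromagnetic_quadratic_identity (F : Fin 4 → Fin 4 → ℝ)
    (hF : ∀ a b, F a b = -F b a) :
    ∀ a b c d,
      hodge2 F a b * up2 (hodge2 F) c d + F a b * up2 F c d =
        -(kd c a * (∑ p, mink d p * emT F p b) -
          kd d a * (∑ p, mink c p * emT F p b) -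
          kd c b * (∑ p, mink d p * emT F p a) +
          kd d b * (∑ p, mink c p * emT F p a)) := by
  intro a b c d
  have kd_eq_one (i j : Fin 4) : kd i j = (1 : Matrix (Fin 4) (Fin 4) ℝ) j i := by
    simp only [kd, Matrix.one_apply, eq_comm]
  have trace : ∑ p, ∑ q, F p q * up2 F p q = 2 * emPsi F := by
    rw [emPsi]
    ring
  rw [hodge2_mul_up2_hodge2, sum_genKronecker_four_mul_mul hF (up2_antisymm hF), trace,
    genKronecker_two]
  simp only [sum_mink_mul_emT hF, kd_eq_one]
  ring
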